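/- Let m be a positive integer, let γ ≥ 0, and let n₁,…,n_m, n, β̄ be positive real numbers. Define ω*_i = n_i^{-(γ+1)/4} / √( (∑_{i'=1}^m n_{i'}^{(1-γ)/2}) / (n β̄) ) for each i. Then: (i) ∑_{i=1}^m (n_i/n) (ω*_i)² = β̄; and (ii) for every vector ω ∈ ℝ^m with ω_i > 0 for all i and ∑_{i=1}^m (n_i/n) ω_i² ≤ β̄, one has ∑_{i=1}^m 1/(ω_i² n_i^γ) ≥ ∑_{i=1}^m 1/((ω*_i)² n_i^γ) = (∑_{i=1}^m n_i^{(1-γ)/2})² / (n β̄). In other words, ω* is the exact minimizer of the weighted excess-risk objective ∑_i 1/(ω_i² n_i^γ) under the average budget constraint ∑_i (n_i/n) ω_i² ≤ β̄, with optimal value (∑_i n_i^{(1-γ)/2})²/(n β̄). -/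

import Mathlib

/-!
Pass from the weights `ω i` to the budget `g i = (n i / N) * ω i ^ 2` spent on each index. With
`r i = n i ^ ((1 - γ) / 2)` the objective becomes `(∑ i, r i ^ 2 / g i) / N` and the constraint
becomes `∑ i, g i ≤ β`. Sedrakyan's form of the Cauchy-Schwarz inequality bounds the objective
below by `(∑ i, r i) ^ 2 / (N * β)`, with equality when `g` is proportional to `r` and exhausts
the budget; solving `(n i / N) * ω i ^ 2 = β * r i / ∑ j, r j` for `ω i` gives the closed form.
-/

section ProportionalShare

variable {ι 𝕜 : Type*} [Field 𝕜] {s : Finset ι} {r g : ι → 𝕜} {β : 𝕜}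

/-- The proportional allocation of a budget `β` among the indices in `s`: index `i` receives the
fraction of `β` given by its share of the total of `r`. For positive `r` and `β` it minimizes
`∑ i ∈ s, r i ^ 2 / g i` among positive allocations `g` of total at most `β`. -/
def proportionalShare (s : Finset ι) (r : ι → 𝕜) (β : 𝕜) (i : ι) : 𝕜 :=
  β * r i / ∑ j ∈ s, r j

theorem sum_proportionalShare (hr : ∑ i ∈ s, r i ≠ 0) :
    ∑ i ∈ s, proportionalShare s r β i = β := by
  simp only [proportionalShare]
  rw [← Finset.sum_div, ← Finset.mul_sum, mul_div_cancel_right₀ β hr]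

theorem sum_sq_div_proportionalShare (hr : ∀ i ∈ s, r i ≠ 0) :
    ∑ i ∈ s, r i ^ 2 / proportionalShare s r β i = (∑ i ∈ s, r i) ^ 2 / β := by
  rw [sq (∑ i ∈ s, r i), Finset.sum_mul, Finset.sum_div]
  refine Finset.sum_congr rfl fun i hi => ?_
  rw [proportionalShare, div_div_eq_mul_div, sq, mul_right_comm,
    mul_div_mul_right _ _ (hr i hi)]

theorem sq_sum_div_le_sum_sq_div_of_sum_le [LinearOrder 𝕜] [IsStrictOrderedRing 𝕜]
    (hg : ∀ i ∈ s, 0 < g i) (hgβ : ∑ i ∈ s, g i ≤ β) :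
    (∑ i ∈ s, r i) ^ 2 / β ≤ ∑ i ∈ s, r i ^ 2 / g i := by
  obtain rfl | hs := s.eq_empty_or_nonempty
  · simp
  · calc
      (∑ i ∈ s, r i) ^ 2 / β ≤ (∑ i ∈ s, r i) ^ 2 / ∑ i ∈ s, g i :=
        div_le_div_of_nonneg_left (sq_nonneg _) (Finset.sum_pos hg hs) hgβ
      _ ≤ ∑ i ∈ s, r i ^ 2 / g i := Finset.sq_sum_div_le_sum_sq_div s r hg

end ProportionalShare

section OptimalWeight

variable {ι : Type*} [Fintype ι] {n : ι → ℝ} {N β : ℝ}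

/-- The closed-form weights `ω*` solving the budget-allocation problem with sizes `n i`, exponent
`γ`, normalization `N` (written `n` in the paper, where it is distinct from the sizes `n i`) and
average budget `β`. -/
noncomputable def optimalWeight (γ : ℝ) (n : ι → ℝ) (N β : ℝ) (i : ι) : ℝ :=
  n i ^ (-(γ + 1) / 4) / √((∑ j, n j ^ ((1 - γ) / 2)) / (N * β))

theorem mul_sq_rpow_eq_rpow (γ : ℝ) {x : ℝ} (hx : 0 < x) :
    x * (x ^ (-(γ + 1) / 4)) ^ 2 = x ^ ((1 - γ) / 2) := by
  calc
    x * (x ^ (-(γ + 1) / 4)) ^ 2 = x ^ (1 + -(γ + 1) / 4 * (2 : ℕ)) := by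
      rw [Real.rpow_add hx, Real.rpow_one, Real.rpow_mul_natCast hx.le]
    _ = x ^ ((1 - γ) / 2) := by
      congr 1
      push_cast
      ring

theorem sq_rpow_eq_div_rpow (γ : ℝ) {x : ℝ} (hx : 0 < x) :
    (x ^ ((1 - γ) / 2)) ^ 2 = x / x ^ γ := by
  rw [← Real.rpow_mul_natCast hx.le, Nat.cast_ofNat, div_mul_cancel₀ _ two_ne_zero,
    Real.rpow_sub hx, Real.rpow_one]

theorem div_mul_sq_optimalWeight (γ : ℝ) (hn : ∀ i, 0 < n i) (hN : 0 < N) (hβ : 0 < β) (i : ι) :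
    n i / N * optimalWeight γ n N β i ^ 2 =
      proportionalShare Finset.univ (fun j => n j ^ ((1 - γ) / 2)) β i := by
  have sum_nonneg : 0 ≤ ∑ j, n j ^ ((1 - γ) / 2) :=
    Finset.sum_nonneg fun j _ => Real.rpow_nonneg (hn j).le _
  rw [optimalWeight, proportionalShare, div_pow, Real.sq_sqrt (by positivity),
    ← mul_sq_rpow_eq_rpow γ (hn i)]
  field_simp

theorem sum_one_div_sq_mul_rpow (γ : ℝ) (hn : ∀ i, 0 < n i) (hN : N ≠ 0) (ω : ι → ℝ) :
    ∑ i, 1 / (ω i ^ 2 * n i ^ γ) =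
      (∑ i, (n i ^ ((1 - γ) / 2)) ^ 2 / (n i / N * ω i ^ 2)) / N := by
  rw [Finset.sum_div]
  refine Finset.sum_congr rfl fun i _ => ?_
  have size_pos := hn i
  rw [sq_rpow_eq_div_rpow γ size_pos]
  field_simp

theorem sum_one_div_sq_optimalWeight_mul_rpow (γ : ℝ) (hn : ∀ i, 0 < n i) (hN : 0 < N)
    (hβ : 0 < β) :
    ∑ i, 1 / (optimalWeight γ n N β i ^ 2 * n i ^ γ) =
      (∑ i, n i ^ ((1 - γ) / 2)) ^ 2 / (N * β) := by
  simp only [sum_one_div_sq_mul_rpow γ hn hN.ne', div_mul_sq_optimalWeight γ hn hN hβ]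
  rw [sum_sq_div_proportionalShare fun i _ => (Real.rpow_pos_of_pos (hn i) _).ne', div_div,
    mul_comm β]

theorem sq_sum_rpow_div_le_sum_one_div_sq_mul_rpow (γ : ℝ) (hn : ∀ i, 0 < n i) (hN : 0 < N)
    {ω : ι → ℝ} (hω : ∀ i, ω i ≠ 0) (hωβ : ∑ i, n i / N * ω i ^ 2 ≤ β) :
    (∑ i, n i ^ ((1 - γ) / 2)) ^ 2 / (N * β) ≤ ∑ i, 1 / (ω i ^ 2 * n i ^ γ) := by
  have budget_pos (i : ι) : 0 < n i / N * ω i ^ 2 :=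
    mul_pos (div_pos (hn i) hN) (sq_pos_of_ne_zero (hω i))
  rw [sum_one_div_sq_mul_rpow γ hn hN.ne', mul_comm N, ← div_div]
  gcongr
  exact sq_sum_div_le_sum_sq_div_of_sum_le (fun i _ => budget_pos i) hωβ

theorem stmt3_general [Nonempty ι] (γ : ℝ) (hn : ∀ i, 0 < n i) (hN : 0 < N) (hβ : 0 < β) :
    (∑ i, n i / N * optimalWeight γ n N β i ^ 2 = β) ∧
    (∀ ω : ι → ℝ, (∀ i, ω i ≠ 0) → (∑ i, n i / N * ω i ^ 2 ≤ β) →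
      ∑ i, 1 / (optimalWeight γ n N β i ^ 2 * n i ^ γ) ≤ ∑ i, 1 / (ω i ^ 2 * n i ^ γ)) ∧
    ∑ i, 1 / (optimalWeight γ n N β i ^ 2 * n i ^ γ) =
      (∑ i, n i ^ ((1 - γ) / 2)) ^ 2 / (N * β) := by
  have optimal_value := sum_one_div_sq_optimalWeight_mul_rpow γ hn hN hβ
  refine ⟨?_, fun ω hω hωβ => ?_, optimal_value⟩
  · have total_pos : 0 < ∑ i, n i ^ ((1 - γ) / 2) :=
      Finset.sum_pos (fun i _ => Real.rpow_pos_of_pos (hn i) _) Finset.univ_nonempty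
    simp only [div_mul_sq_optimalWeight γ hn hN hβ]
    exact sum_proportionalShare total_pos.ne'
  · exact optimal_value.trans_le (sq_sum_rpow_div_le_sum_one_div_sq_mul_rpow γ hn hN hω hωβ)

end OptimalWeight

/-- Closed-form solution of the budget-allocation problem (eq. (8) of the paper):
the weights `ωs i = n i ^ (-(γ+1)/4) / √((∑ i', n i' ^ ((1-γ)/2)) / (N * β̄))`
saturate the average budget constraint, and minimize `∑ i, 1/(ω i ² * n i ^ γ)` among all
positive weight vectors satisfying `∑ i, (n i / N) * ω i ² ≤ β̄`, with optimal value
`(∑ i, n i ^ ((1-γ)/2))² / (N * β̄)`. -/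
theorem stmt3 (m : ℕ) (hm : 1 ≤ m) (γ : ℝ) (hγ : 0 ≤ γ)
    (n : Fin m → ℝ) (hn : ∀ i, 0 < n i) (N βbar : ℝ) (hN : 0 < N) (hβ : 0 < βbar) :
    let ωs : Fin m → ℝ := fun i =>
      n i ^ (-(γ + 1) / 4) / Real.sqrt ((∑ i', n i' ^ ((1 - γ) / 2)) / (N * βbar))
    (∑ i, (n i / N) * ωs i ^ 2 = βbar) ∧
    (∀ ω : Fin m → ℝ, (∀ i, 0 < ω i) → (∑ i, (n i / N) * ω i ^ 2 ≤ βbar) →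
      (∑ i, 1 / (ωs i ^ 2 * n i ^ γ)) ≤ ∑ i, 1 / (ω i ^ 2 * n i ^ γ)) ∧
    (∑ i, 1 / (ωs i ^ 2 * n i ^ γ)) = (∑ i, n i ^ ((1 - γ) / 2)) ^ 2 / (N * βbar) := by
  have : Nonempty (Fin m) := Fin.pos_iff_nonempty.mp hm
  obtain ⟨saturates, minimizes, value⟩ := stmt3_general γ hn hN hβ
  exact ⟨saturates, fun ω hω => minimizes ω fun i => (hω i).ne', value⟩
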